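/- arXiv:2304.01808 — 3 statements merged into one kernel-verified Lean document; each statement's English description precedes it below -/
import Mathlib

section
/- Let g ≥ 1 and n ≥ 1 be natural numbers. For every vector v : (Fin g ⊕ Fin g) → ZMod n there exists a matrix P in the symplectic group Sp(2g, ZMod n) (an element of Matrix.symplecticGroup (Fin g) (ZMod n)) such that the matrix-vector product P.mulVec v vanishes in every coordinate i with i ≠ Sum.inl 0; that is, P.mulVec v is supported in the single coordinate Sum.inl 0. -/
/-!
The statement holds already over `ℤ`: lift `v` to an integral vector, reduce it there, and map the
integral symplectic matrix back to `ZMod n`. Over `ℤ` the reduction uses two symplectic matrices.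

* Bézout's identity in each hyperbolic plane, with coordinates `inl i` and `inr i`, gives elements
  of `SL₂(ℤ)` killing all the `inr i` coordinates (`exists_symplectic_kill_inr`). Together they
  form a block matrix with diagonal blocks.
* The remaining vector lies in a Lagrangian summand, on which `GL_g(ℤ)` acts through the symplectic
  matrices `diag(U, (U⁻¹)ᵀ)`. The Euclidean algorithm, run with transvections, gives a `U` that
  leaves one nonzero coordinate, and a permutation moves it to the chosen place
  (`exists_unit_mulVec_support_single`).
-/

open Matrix in
/-- The Euclidean algorithm by row operations. The descent is on `∑ i, |x i|`: while two coordinates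
are nonzero, the larger one is replaced by its remainder modulo the smaller one. -/
lemma exists_unit_mulVec_support_le_one {ι : Type*} [Fintype ι] [DecidableEq ι] [Nonempty ι]
    (N : ℕ) : ∀ x : ι → ℤ, ∑ i, (x i).natAbs = N →
      ∃ (U : (Matrix ι ι ℤ)ˣ) (k : ι), ∀ i, i ≠ k → (U.1 *ᵥ x) i = 0 := by
  induction N using Nat.strong_induction_on with
  | _ N ih =>
    intro x hx
    by_cases h : ∃ i j, i ≠ j ∧ x i ≠ 0 ∧ (x i).natAbs ≤ (x j).natAbs
    · obtain ⟨i, j, hij, hi, hle⟩ := h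
      let c : ℤ := x j / x i
      let T : (Matrix ι ι ℤ)ˣ :=
        ⟨transvection j i (-c), transvection j i c,
          by rw [transvection_mul_transvection_same _ _ hij.symm]; simp,
          by rw [transvection_mul_transvection_same _ _ hij.symm]; simp⟩
      have hT : T.1 *ᵥ x = Function.update x j (x j % x i) := by
        ext k
        by_cases hk : k = j
        · subst hk
          simp only [T, c, transvection, add_mulVec, one_mulVec, single_mulVec, Pi.add_apply,
            Function.update_self, Int.emod_def]
          ring
        · simp [T, transvection, add_mulVec, single_mulVec, Function.update_of_ne hk]
      have hlt : ∑ k, ((T.1 *ᵥ x) k).natAbs < N := by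
        rw [hT, ← hx]
        have hj : (x j % x i).natAbs < (x j).natAbs := by
          have h1 := Int.emod_nonneg (x j) hi
          have h2 := Int.emod_lt_abs (x j) hi
          rw [Int.abs_eq_natAbs] at h2
          omega
        refine Finset.sum_lt_sum (fun k _ => ?_) ⟨j, Finset.mem_univ j, by simpa using hj⟩
        by_cases hk : k = j
        · subst hk
          simpa using hj.le
        · simp [Function.update_of_ne hk]
      obtain ⟨U, k, hU⟩ := ih _ hlt _ rfl
      exact ⟨U * T, k, fun i hi => by simpa [mulVec_mulVec] using hU i hi⟩
    · push Not at h
      by_cases h0 : ∃ k, x k ≠ 0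
      · obtain ⟨k, hk⟩ := h0
        refine ⟨1, k, fun i hi => ?_⟩
        have h1 := h k i hi.symm hk
        by_contra h2
        have h3 := h i k hi (by simpa using h2)
        omega
      · push Not at h0
        exact ⟨1, Classical.arbitrary ι, fun i _ => by simp [h0]⟩

open Matrix in
lemma exists_unit_mulVec_support_single {ι : Type*} [Fintype ι] [DecidableEq ι]
    (o : ι) (x : ι → ℤ) :
    ∃ U : (Matrix ι ι ℤ)ˣ, ∀ i, i ≠ o → (U.1 *ᵥ x) i = 0 := by
  have : Nonempty ι := ⟨o⟩
  obtain ⟨U, k, hU⟩ := exists_unit_mulVec_support_le_one _ x rfl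
  have hs : (Equiv.swap o k).permMatrix ℤ * (Equiv.swap o k).permMatrix ℤ = 1 := by
    rw [← permMatrix_mul]
    simp
  refine ⟨⟨_, _, hs, hs⟩ * U, fun i hi => ?_⟩
  rw [Units.val_mul, ← mulVec_mulVec, permMatrix_mulVec]
  refine hU _ fun h => hi ?_
  rw [Equiv.swap_apply_eq_iff] at h
  simpa using h

lemma exists_sl_two_kill (a b : ℤ) : ∃ p q r s : ℤ, p * s - r * q = 1 ∧ r * a + s * b = 0 := by
  rcases Nat.eq_zero_or_pos (Int.gcd a b) with h | h
  · obtain ⟨rfl, rfl⟩ := Int.gcd_eq_zero_iff.1 h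
    exact ⟨1, 0, 0, 1, by simp, by simp⟩
  · obtain ⟨a', b', hab, ha, hb⟩ := Int.exists_gcd_one h
    obtain ⟨p, q, hpq⟩ := Int.isCoprime_iff_gcd_eq_one.2 hab
    refine ⟨p, q, -b', a', by linarith, ?_⟩
    linear_combination (-b') * ha + a' * hb

open Matrix in
lemma exists_symplectic_kill_inr {ι : Type*} [Fintype ι] [DecidableEq ι] (v : ι ⊕ ι → ℤ) :
    ∃ P ∈ symplecticGroup ι ℤ, ∀ i, (P *ᵥ v) (Sum.inr i) = 0 := by
  choose p q r s hdet hkill using fun i => exists_sl_two_kill (v (Sum.inl i)) (v (Sum.inr i))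
  refine ⟨fromBlocks (diagonal p) (diagonal q) (diagonal r) (diagonal s),
    SymplecticGroup.fromBlocks_mem_iff.2 ⟨?_, ?_, ?_⟩, fun i => ?_⟩
  · simp [mul_comm]
  · simp [mul_comm]
  · simp [diagonal_sub, hdet]
  · simpa [fromBlocks_mulVec, mulVec_diagonal] using hkill i

open Matrix in
lemma exists_symplectic_support_single_int {ι : Type*} [Fintype ι] [DecidableEq ι] (o : ι)
    (v : ι ⊕ ι → ℤ) :
    ∃ P ∈ symplecticGroup ι ℤ, ∀ i, i ≠ Sum.inl o → (P *ᵥ v) i = 0 := by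
  obtain ⟨P, hP, hPv⟩ := exists_symplectic_kill_inr v
  obtain ⟨U, hU⟩ := exists_unit_mulVec_support_single o ((P *ᵥ v) ∘ Sum.inl)
  have hr : (P *ᵥ v) ∘ Sum.inr = 0 := funext hPv
  refine ⟨fromBlocks U.1 0 0 (U⁻¹).1ᵀ * P, mul_mem ?_ hP, ?_⟩
  · refine SymplecticGroup.fromBlocks_mem_iff.2 ⟨by simp, by simp, ?_⟩
    rw [← transpose_mul, Units.inv_mul]
    simp
  · rw [← mulVec_mulVec, fromBlocks_mulVec, hr]
    rintro (i | i) hi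
    · simpa using hU i (by simpa using hi)
    · simp

theorem exists_symplectic_support_single (g n : ℕ) (hg : 1 ≤ g) (hn : 1 ≤ n)
    (v : (Fin g ⊕ Fin g) → ZMod n) :
    ∃ P ∈ Matrix.symplecticGroup (Fin g) (ZMod n),
      ∀ i : Fin g ⊕ Fin g, i ≠ Sum.inl ⟨0, hg⟩ → P.mulVec v i = 0 := by
  choose w hw using fun i => ZMod.intCast_surjective (v i)
  obtain ⟨P, hP, hPw⟩ := exists_symplectic_support_single_int ⟨0, hg⟩ w
  refine ⟨P.map (Int.castRingHom (ZMod n)), SymplecticGroup.map_mem hP _, fun i hi => ?_⟩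
  have hv : v = Int.castRingHom (ZMod n) ∘ w := funext fun i => (hw i).symm
  rw [hv, ← RingHom.map_mulVec, hPw i hi, map_zero]
end

section
/- Let g ≥ 1 and n ≥ 1 be natural numbers. For every vector v : (Fin g ⊕ Fin g) → ZMod n there exists a matrix P in the symplectic group Sp(2g, ZMod n) (an element of Matrix.symplecticGroup (Fin g) (ZMod n)) such that (P.mulVec v) (Sum.inr j) = 0 for every j : Fin g; that is, all of the second-block ("b") coordinates of P.mulVec v can be made zero. -/
/-!
The matrices with diagonal blocks embed `SL₂(R)^g` in `Sp(2g, R)`, with the `j`-th factor acting on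
the pair of coordinates `(inl j, inr j)`. Hence it is enough to kill the second entry of a single
pair `(a, b)` by a matrix of determinant `1`. Lift `a`, `b` to integers `d a'`, `d b'` with `a'`, `b'`
coprime and choose a Bézout relation `x a' + y b' = 1`: the matrix with rows `(x, y)`, `(-b', a')`
has determinant `1` and sends `(a, b)` to `(d, 0)`.
-/

/-- A pair of residues is sent to a pair with vanishing second entry by a matrix with rows
`(p, q)`, `(r, s)` of determinant `1`. -/
lemma exists_det_one_kill_second {n : ℕ} (a b : ZMod n) :
    ∃ p q r s : ZMod n, p * s - q * r = 1 ∧ r * a + s * b = 0 := by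
  obtain ⟨a, rfl⟩ := ZMod.intCast_surjective a
  obtain ⟨b, rfl⟩ := ZMod.intCast_surjective b
  obtain ⟨a', b', ha, hb, hu⟩ := extract_gcd a b
  obtain ⟨x, y, hxy⟩ := (gcd_isUnit_iff a' b').1 hu
  refine ⟨(x : ℤ), (y : ℤ), ((-b' : ℤ) : ZMod n), (a' : ℤ), ?_, ?_⟩
  · rw [← Int.cast_mul, ← Int.cast_mul, ← Int.cast_sub, ← Int.cast_one]
    congr 1
    linear_combination hxy
  · rw [← Int.cast_mul, ← Int.cast_mul, ← Int.cast_add, ← Int.cast_zero]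
    congr 1
    linear_combination (-b') * ha + a' * hb

theorem exists_symplectic_kill_second_block (g n : ℕ) (hg : 1 ≤ g) (hn : 1 ≤ n)
    (v : (Fin g ⊕ Fin g) → ZMod n) :
    ∃ P ∈ Matrix.symplecticGroup (Fin g) (ZMod n),
      ∀ j : Fin g, P.mulVec v (Sum.inr j) = 0 := by
  choose p q r s hdet hkill using fun j : Fin g =>
    exists_det_one_kill_second (v (Sum.inl j)) (v (Sum.inr j))
  refine ⟨Matrix.fromBlocks (Matrix.diagonal p) (Matrix.diagonal q)
    (Matrix.diagonal r) (Matrix.diagonal s), ?_, fun j => ?_⟩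
  · rw [SymplecticGroup.mem_iff, Matrix.J, Matrix.fromBlocks_transpose,
      Matrix.fromBlocks_multiply, Matrix.fromBlocks_multiply]
    simp only [Matrix.diagonal_transpose, Matrix.diagonal_mul_diagonal, Matrix.diagonal_neg,
      Matrix.diagonal_add, ← Matrix.diagonal_one, ← Matrix.diagonal_zero]
    congr 2 <;> funext j
    · ring
    · linear_combination -hdet j
    · linear_combination hdet j
    · ring
  · simpa [Matrix.fromBlocks_mulVec, Matrix.mulVec_diagonal] using hkill j
end

section
/- Fix natural numbers t ≥ 1 and r, set A := ZMod t × ZMod t, and let m : Fin r → ℤ. Define d₂ : (Fin r → A) → (Option (Fin r) → A) by (d₂ e) none = Σ_i e i and (d₂ e) (some i) = (m i) • (e i), and define E : (Option (Fin r) → A) → A by E f = (∏_i m i) • f none - Σ_i (∏_{j ≠ i} m j) • f (some i). Then E (d₂ e) = 0 for every e : Fin r → A; that is, E vanishes on the range of d₂. -/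
/-- The coboundary map `d₂` from degree-1 cochains (supported on the generators
`x̄*_i`, `i : Fin r`) to degree-2 cochains (functions on `Option (Fin r)`, where
`none` corresponds to `y*_0` and `some i` to `y*_i`), with coefficients in
`A = ZMod t × ZMod t`. -/
def d2 (t r : ℕ) (m : Fin r → ℤ) (e : Fin r → ZMod t × ZMod t) :
    Option (Fin r) → ZMod t × ZMod t
  | none => ∑ i, e i
  | some i => (m i) • e i

/-- The "Euler number" evaluation homomorphism on degree-2 cochains:
`E f = (∏ i, m i) • f none - ∑ i, (∏_{j ≠ i} m j) • f (some i)`. -/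
def eulerEval (t r : ℕ) (m : Fin r → ℤ)
    (f : Option (Fin r) → ZMod t × ZMod t) : ZMod t × ZMod t :=
  (∏ i, m i) • f none - ∑ i, (∏ j ∈ Finset.univ.erase i, m j) • f (some i)

/-- `E` vanishes on coboundaries, hence is well defined on `H²`. -/
theorem eulerEval_d2_eq_zero (t r : ℕ) (ht : 1 ≤ t) (m : Fin r → ℤ)
    (e : Fin r → ZMod t × ZMod t) :
    eulerEval t r m (d2 t r m e) = 0 := by
  simp only [eulerEval, d2, smul_smul, Finset.smul_sum,
    Finset.prod_erase_mul _ m (Finset.mem_univ _), sub_self]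
end
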